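/- Let (Ω, F, P) be a filtered probability space with filtration (F_t)_{t ∈ ℕ}, let ε ∈ (0, 1), let (M_t)_{t ≥ 1} be adapted with M_t ∈ [0, 1] almost surely, and let (λ_t)_{t ≥ 1} be a predictable process with λ_t ∈ [0, 1] almost surely. Assume E[M_t | F_{t−1}] ≥ ε almost surely for all t ≥ 1. Define X_0 = 1 and X_t = ∏_{i=1}^t (1 + λ_i (ε − M_i)). Then for every α ∈ (0, 1), P( ∃ t ≥ 0 : X_t ≥ 1/α ) ≤ α; that is, the hitting-time test that raises a tracking-failure alert as soon as X_t ≥ 1/α has Type-I error (false alert probability) at most α under the null. -/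

import Mathlib

open MeasureTheory Set Finset

/-- Ville's inequality over a finite horizon, with the contribution of the paths that have not yet
crossed the level `c` kept on the left-hand side. -/
theorem MeasureTheory.Supermartingale.mul_measureReal_exists_le_add_setIntegral_le
    {Ω : Type*} {mΩ : MeasurableSpace Ω} {μ : Measure Ω} [IsFiniteMeasure μ]
    {𝓕 : Filtration ℕ mΩ} {X : ℕ → Ω → ℝ} (hX : Supermartingale X 𝓕 μ) (c : ℝ) (n : ℕ) :
    c * μ.real {ω | ∃ t ≤ n, c ≤ X t ω} + ∫ ω in {ω | ∃ t ≤ n, c ≤ X t ω}ᶜ, X n ω ∂μ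
      ≤ ∫ ω, X 0 ω ∂μ := by
  have hmeas (n : ℕ) : MeasurableSet[𝓕 n] {ω | ∃ t ≤ n, c ≤ X t ω} := by
    have : {ω | ∃ t ≤ n, c ≤ X t ω} = ⋃ t ∈ Set.Iic n, {ω | c ≤ X t ω} := by ext; simp
    rw [this]
    refine MeasurableSet.biUnion (Set.to_countable _) fun t ht => ?_
    exact 𝓕.mono ht _ (measurableSet_le measurable_const (hX.1 t).measurable)
  have hcross {s : Set Ω} (hs : MeasurableSet s) (t : ℕ) (h : ∀ ω ∈ s, c ≤ X t ω) :
      c * μ.real s ≤ ∫ ω in s, X t ω ∂μ :=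
    setIntegral_ge_of_const_le_real hs (measure_ne_top _ _) h (hX.integrable t).integrableOn
  induction n with
  | zero =>
    rw [← integral_add_compl (𝓕.le 0 _ (hmeas 0)) (hX.integrable 0)]
    gcongr
    exact hcross (𝓕.le 0 _ (hmeas 0)) 0 (by simp)
  | succ n ih =>
    refine le_trans ?_ ih
    set A := {ω | ∃ t ≤ n, c ≤ X t ω}
    set B := {ω | ∃ t ≤ n + 1, c ≤ X t ω}
    have hAm : MeasurableSet A := 𝓕.le n _ (hmeas n)
    have hBm : MeasurableSet B := 𝓕.le (n + 1) _ (hmeas (n + 1))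
    have hAB : A ⊆ B := fun ω ⟨t, ht, h⟩ => ⟨t, ht.trans n.le_succ, h⟩
    have hstep := hX.setIntegral_le n.le_succ (hmeas n).compl
    have hsplit : ∫ ω in Aᶜ, X (n + 1) ω ∂μ
        = ∫ ω in B \ A, X (n + 1) ω ∂μ + ∫ ω in Bᶜ, X (n + 1) ω ∂μ := by
      rw [← setIntegral_union (disjoint_compl_right.mono_left Set.sdiff_subset) hBm.compl
        (hX.integrable _).integrableOn (hX.integrable _).integrableOn]
      congr 2
      ext ω
      have := @hAB ω
      simp only [Set.mem_compl_iff, Set.mem_union, Set.mem_sdiff]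
      tauto
    have hnew := hcross (hBm.diff hAm) (n + 1) (by
      rintro ω ⟨⟨t, ht, h⟩, hnot⟩
      obtain rfl | hlt := ht.eq_or_lt
      · exact h
      · exact absurd ⟨t, Nat.le_of_lt_succ hlt, h⟩ hnot)
    have hdiff := measureReal_sdiff (μ := μ) hAB hAm
    rw [hdiff] at hnew
    change ∫ ω in Aᶜ, X (n + 1) ω ∂μ ≤ ∫ ω in Aᶜ, X n ω ∂μ at hstep
    linarith

/-- Ville's inequality for almost surely nonnegative supermartingales. -/
theorem MeasureTheory.Supermartingale.measure_exists_le_le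
    {Ω : Type*} {mΩ : MeasurableSpace Ω} {μ : Measure Ω} [IsFiniteMeasure μ]
    {𝓕 : Filtration ℕ mΩ} {X : ℕ → Ω → ℝ} (hX : Supermartingale X 𝓕 μ)
    (hnonneg : ∀ t, 0 ≤ᵐ[μ] X t) {c : ℝ} (hc : 0 < c) :
    μ {ω | ∃ t, c ≤ X t ω} ≤ ENNReal.ofReal ((∫ ω, X 0 ω ∂μ) / c) := by
  have hunion : {ω | ∃ t, c ≤ X t ω} = ⋃ n, {ω | ∃ t ≤ n, c ≤ X t ω} := by
    ext ω
    simp only [Set.mem_ofPred_eq, Set.mem_iUnion]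
    exact ⟨fun ⟨t, h⟩ => ⟨t, t, le_rfl, h⟩, fun ⟨_, t, _, h⟩ => ⟨t, h⟩⟩
  have hmono : Monotone fun n => {ω | ∃ t ≤ n, c ≤ X t ω} :=
    fun _ _ hmn _ ⟨t, ht, h⟩ => ⟨t, ht.trans hmn, h⟩
  rw [hunion, hmono.measure_iUnion]
  refine iSup_le fun n => ?_
  rw [← ofReal_measureReal]
  refine ENNReal.ofReal_le_ofReal ?_
  rw [le_div_iff₀' hc]
  have hrest : 0 ≤ ∫ ω in {ω | ∃ t ≤ n, c ≤ X t ω}ᶜ, X n ω ∂μ :=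
    integral_nonneg_of_ae (ae_restrict_of_ae (hnonneg n))
  linarith [hX.mul_measureReal_exists_le_add_setIntegral_le c n]

/-- A nonnegative integrable adapted process with multiplicative increments
`1 + λ (ε - M)` is a supermartingale when the bets are predictable and the conditional means of
`M` are at least `ε`. -/
theorem supermartingale_of_betting
    {Ω : Type*} {mΩ : MeasurableSpace Ω} {P : Measure Ω} [IsFiniteMeasure P]
    {𝓕 : Filtration ℕ mΩ} {ε : ℝ} {M lam X : ℕ → Ω → ℝ}
    (hMint : ∀ t, Integrable (M t) P)
    (hpred : ∀ t, StronglyMeasurable[𝓕 t] (lam (t + 1)))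
    (hlam : ∀ t, 0 ≤ᵐ[P] lam (t + 1))
    (hnull : ∀ t, (fun _ : Ω => ε) ≤ᵐ[P] P[M (t + 1) | 𝓕 t])
    (hadapted : StronglyAdapted 𝓕 X) (hint : ∀ t, Integrable (X t) P)
    (hnonneg : ∀ t, 0 ≤ᵐ[P] X t)
    (hsucc : ∀ t ω, X (t + 1) ω = X t ω * (1 + lam (t + 1) ω * (ε - M (t + 1) ω))) :
    Supermartingale X 𝓕 P := by
  refine supermartingale_nat hadapted hint fun t => ?_
  have hincr : X (t + 1) = X t + (X t * lam (t + 1)) * ((fun _ => ε) - M (t + 1)) := by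
    ext ω
    simp only [hsucc, Pi.add_apply, Pi.mul_apply, Pi.sub_apply]
    ring
  have hgain : Integrable ((X t * lam (t + 1)) * ((fun _ => ε) - M (t + 1))) P := by
    have := (hint (t + 1)).sub (hint t)
    rwa [hincr, add_sub_cancel_left] at this
  have hdev : Integrable ((fun _ => ε) - M (t + 1)) P := (integrable_const ε).sub (hMint _)
  rw [hincr]
  filter_upwards [condExp_add (hint t) hgain (𝓕 t),
    condExp_mul_of_stronglyMeasurable_left ((hadapted t).mul (hpred t)) hgain hdev,
    condExp_sub (integrable_const ε) (hMint (t + 1)) (𝓕 t), hnull t, hlam t, hnonneg t]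
    with ω hadd hmul hsub hε hl hx
  rw [hadd, Pi.add_apply, hmul, Pi.mul_apply, hsub, Pi.sub_apply,
    condExp_of_stronglyMeasurable (𝓕.le t) (hadapted t) (hint t), condExp_const (𝓕.le t)]
  have : (X t * lam (t + 1)) ω * (ε - (P[M (t + 1) | 𝓕 t]) ω) ≤ 0 :=
    mul_nonpos_of_nonneg_of_nonpos (mul_nonneg hx hl) (sub_nonpos.mpr hε)
  linarith

/-- The paper's anytime-valid false-alert guarantee: under the null
`E[M t | 𝓕 (t-1)] ≥ ε`, the e-process `X t = ∏_{i=1}^t (1 + λ i (ε - M i))` (with `X 0 = 1`)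
satisfies `P(∃ t, X t ≥ 1/α) ≤ α` for every `α ∈ (0,1)`: the hitting-time test that raises a
tracking-failure alert as soon as `X t ≥ 1/α` has Type-I error at most `α`. -/
theorem eprocess_false_alert_control
    {Ω : Type*} {mΩ : MeasurableSpace Ω} {P : Measure Ω} [IsProbabilityMeasure P]
    (𝓕 : Filtration ℕ mΩ) (ε : ℝ) (hε : ε ∈ Set.Ioo (0 : ℝ) 1)
    (M lam : ℕ → Ω → ℝ)
    (hMadapted : Adapted 𝓕 M)
    (hMbdd : ∀ t, ∀ᵐ ω ∂P, M t ω ∈ Set.Icc (0 : ℝ) 1)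
    (hMint : ∀ t, Integrable (M t) P)
    (hpred : ∀ t, 1 ≤ t → StronglyMeasurable[𝓕 (t - 1)] (lam t))
    (hlam : ∀ t, ∀ᵐ ω ∂P, lam t ω ∈ Set.Icc (0 : ℝ) 1)
    (hnull : ∀ t, 1 ≤ t → (fun _ : Ω => ε) ≤ᵐ[P] P[M t | 𝓕 (t - 1)])
    (X : ℕ → Ω → ℝ)
    (hX : ∀ t ω, X t ω = ∏ i ∈ Finset.Icc 1 t, (1 + lam i ω * (ε - M i ω)))
    (α : ℝ) (hα : α ∈ Set.Ioo (0 : ℝ) 1) :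
    P {ω | ∃ t : ℕ, (1 / α : ℝ) ≤ X t ω} ≤ ENNReal.ofReal α := by
  obtain ⟨hε0, hε1⟩ := hε
  have hzero : X 0 = fun _ => 1 := by ext ω; simp [hX]
  have hsucc (t : ℕ) (ω : Ω) :
      X (t + 1) ω = X t ω * (1 + lam (t + 1) ω * (ε - M (t + 1) ω)) := by
    rw [hX, hX, Finset.prod_Icc_succ_top (by omega)]
  have hpred' (t : ℕ) : StronglyMeasurable[𝓕 t] (lam (t + 1)) := hpred (t + 1) (by omega)
  have hadapted : StronglyAdapted 𝓕 X := by
    intro t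
    induction t with
    | zero => rw [hzero]; exact stronglyMeasurable_const
    | succ t ih =>
      rw [show X (t + 1) = _ from funext (hsucc t)]
      exact (ih.mono (𝓕.mono t.le_succ)).mul (stronglyMeasurable_const.add
        (((hpred' t).mono (𝓕.mono t.le_succ)).mul
          (stronglyMeasurable_const.sub (hMadapted (t + 1)).stronglyMeasurable)))
  have hbound (t : ℕ) : ∀ᵐ ω ∂P, X t ω ∈ Set.Icc (0 : ℝ) (2 ^ t) := by
    induction t with
    | zero => simp [hzero]
    | succ t ih =>
      filter_upwards [ih, hMbdd (t + 1), hlam (t + 1)] with ω hx hm hl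
      obtain ⟨hx0, hx1⟩ := hx
      obtain ⟨hm0, hm1⟩ := hm
      obtain ⟨hl0, hl1⟩ := hl
      have hlow : 0 ≤ 1 + lam (t + 1) ω * (ε - M (t + 1) ω) := by nlinarith
      have hupp : 1 + lam (t + 1) ω * (ε - M (t + 1) ω) ≤ 2 := by nlinarith
      rw [hsucc, pow_succ]
      exact ⟨mul_nonneg hx0 hlow, mul_le_mul hx1 hupp hlow (by positivity)⟩
  have hnonneg (t : ℕ) : 0 ≤ᵐ[P] X t := (hbound t).mono fun ω h => h.1
  have hint (t : ℕ) : Integrable (X t) P :=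
    Integrable.of_bound ((hadapted t).mono (𝓕.le t)).aestronglyMeasurable (2 ^ t)
      ((hbound t).mono fun ω h => by rw [Real.norm_of_nonneg h.1]; exact h.2)
  have hsuper : Supermartingale X 𝓕 P :=
    supermartingale_of_betting hMint hpred' (fun t => (hlam (t + 1)).mono fun ω h => h.1)
      (fun t => hnull (t + 1) (by omega)) hadapted hint hnonneg hsucc
  simpa [hzero] using hsuper.measure_exists_le_le hnonneg (one_div_pos.mpr hα.1)
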